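/- arXiv:2206.10123 — 5 statements merged into one kernel-verified Lean document; each statement's English description precedes it below -/
import Mathlib

section
/- Let X and Y be finite nonempty alphabets with |X| = 2^m, φ : GF(2)^m → X a bijection extended componentwise to Φ : GF(2)^{nm} → X^n, and U : X×Y → (0,∞) a decoding metric, with U(x⃗,y⃗) = ∏_{i=1}^n U(x_i, y_i) for x⃗ ∈ X^n, y⃗ ∈ Y^n. Let k ≤ nm be a positive integer, let G be uniform on the k×(nm) matrices over GF(2) and v uniform on GF(2)^{nm}, independent, and set c(w) = wG + v for w ∈ GF(2)^k. Fix a message w, a binary vector c₀ ∈ GF(2)^{nm} with x⃗ = Φ(c₀), and y⃗ ∈ Y^n, and let α = |{ x⃗' ∈ X^n : U(x⃗', y⃗) ≥ U(x⃗, y⃗) }| · 2^{−nm}. Then the conditional probability P̄ = Pr( ∃ w' ≠ w : U(Φ(c(w')), y⃗) ≥ U(x⃗, y⃗) | c(w) = c₀ ) satisfies min{ 1/2, (2^k − 2)α/2 } ≤ P̄ ≤ min{ 1, (2^k − 1)α }. -/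
open Classical in
theorem tub_fiber {G H : Type*} [AddCommGroup G] [AddCommGroup H] [Fintype G] [Fintype H]
    (f : G →+ H) (hf : Function.Surjective f) (S : Finset H) :
    ((Finset.univ.filter (fun g => f g ∈ S)).card : ℝ) * Fintype.card H
      = S.card * Fintype.card G := by
  have key : ∀ T : Finset H, (Finset.univ.filter (fun g => f g ∈ T)).card
      = T.card * (Finset.univ.filter (fun g => f g = 0)).card := by
    intro T
    rw [Finset.card_eq_sum_card_fiberwise (f := f) (t := T)
      (s := Finset.univ.filter (fun g => f g ∈ T)) (by intro g hg; simpa using hg)]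
    rw [Finset.sum_const_nat (m := (Finset.univ.filter (fun g => f g = 0)).card)]
    intro h hh
    obtain ⟨g0, rfl⟩ := hf h
    refine Finset.card_bij' (fun g _ => g - g0) (fun g _ => g + g0) ?_ ?_ ?_ ?_
    · intro g hg
      simp at hg ⊢
      simp [hg.2]
    · intro g hg
      simp at hg ⊢
      simp [hg, hh]
    · intro g hg; simp
    · intro g hg; simp
  have h1 := key S
  have h2 := key Finset.univ
  simp at h2
  rw [h1, h2]
  push_cast; ring

open Classical in
theorem tub_abstract {Ω I : Type*} [Fintype Ω] (F : Finset I)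
    (E : I → Ω → Prop) (a T : ℝ) (hT : T = Fintype.card Ω) (hTpos : 0 < T) (ha : 0 < a)
    (hF : 1 ≤ F.card)
    (h1 : ∀ u ∈ F, ((Finset.univ.filter (fun ω => E u ω)).card : ℝ) = a * T)
    (h2 : ∀ u ∈ F, ∀ v ∈ F, u ≠ v →
      ((Finset.univ.filter (fun ω => E u ω ∧ E v ω)).card : ℝ) = a ^ 2 * T) (b : ℝ)
    (hb : b = (Finset.univ.filter (fun ω => ∃ u ∈ F, E u ω)).card) :
    min (1 / 2) (((F.card : ℝ) - 1) * a / 2) ≤ b / T ∧ b / T ≤ min 1 (F.card * a) := by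
  set M : ℝ := (F.card : ℝ) with hM
  have hM1 : 1 ≤ M := by rw [hM]; exact_mod_cast hF
  set B := Finset.univ.filter (fun ω => ∃ u ∈ F, E u ω) with hB
  let Z : Ω → ℝ := fun ω => ∑ u ∈ F, if E u ω then 1 else 0
  have hsupp : ∀ ω ∉ B, Z ω = 0 := by
    intro ω hω
    apply Finset.sum_eq_zero
    intro u hu
    rw [if_neg]
    intro h
    exact hω (by simp [hB]; exact ⟨u, hu, h⟩)
  have hs1 : ∑ ω ∈ B, Z ω = M * (a * T) := by
    rw [Finset.sum_subset (Finset.subset_univ B) (fun ω _ h => hsupp ω h)]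
    rw [Finset.sum_comm]
    rw [Finset.sum_congr rfl (g := fun _ => a * T)]
    · simp [hM]
    · intro u hu
      rw [← h1 u hu]; simp
  have hs2 : ∑ ω ∈ B, Z ω ^ 2 = M * (a * T + (M - 1) * (a ^ 2 * T)) := by
    rw [Finset.sum_subset (Finset.subset_univ B) (fun ω _ h => by rw [hsupp ω h]; simp)]
    have : ∀ ω, Z ω ^ 2 = ∑ u ∈ F, ∑ v ∈ F, if E u ω ∧ E v ω then (1:ℝ) else 0 := by
      intro ω
      simp only [Z]
      rw [sq, Finset.sum_mul_sum]
      refine Finset.sum_congr rfl fun u _ => Finset.sum_congr rfl fun v _ => ?_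
      by_cases h : E u ω <;> by_cases h' : E v ω <;> simp [h, h']
    simp_rw [this]
    rw [Finset.sum_comm]
    rw [Finset.sum_congr rfl (g := fun _ => (a * T + (M - 1) * (a ^ 2 * T)))]
    · rw [Finset.sum_const, nsmul_eq_mul]
    · intro u hu
      rw [Finset.sum_comm, ← Finset.add_sum_erase F _ hu]
      congr 1
      · rw [← h1 u hu]; simp
      · rw [Finset.sum_congr rfl (g := fun _ => a ^ 2 * T)]
        · rw [Finset.sum_const, Finset.card_erase_of_mem hu, nsmul_eq_mul, Nat.cast_sub hF]
          simp [hM]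
        · intro v hv
          rw [← h2 u hu v (Finset.mem_of_mem_erase hv) (Finset.ne_of_mem_erase hv).symm]
          simp
  have hcs := sq_sum_le_card_mul_sum_sq (s := B) (f := Z)
  rw [hs1, hs2, ← hb] at hcs
  have hb0 : 0 ≤ b := by rw [hb]; positivity
  have hmain : M * a * T ≤ b * (1 + (M - 1) * a) := by
    have hpos : 0 < M * a * T := by positivity
    refine le_of_mul_le_mul_left ?_ hpos
    calc _ = (M * (a * T)) ^ 2 := by ring
      _ ≤ _ := hcs
      _ = _ := by ring
  refine ⟨?_, le_min ?_ ?_⟩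
  · rw [le_div_iff₀ hTpos]
    rcases le_total 1 ((M - 1) * a) with h | h
    · refine (mul_le_mul_of_nonneg_right (min_le_left _ _) hTpos.le).trans ?_
      have hp : 0 < (M - 1) * a := by linarith
      have e1 : b * (1 + (M - 1) * a) ≤ b * (2 * ((M - 1) * a)) :=
        mul_le_mul_of_nonneg_left (by linarith) hb0
      have e2 : 0 < a * T := by positivity
      refine le_of_mul_le_mul_left ?_ hp
      nlinarith
    · refine (mul_le_mul_of_nonneg_right (min_le_right _ _) hTpos.le).trans ?_
      have e1 : b * (1 + (M - 1) * a) ≤ b * 2 :=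
        mul_le_mul_of_nonneg_left (by linarith) hb0
      have e2 : 0 < a * T := by positivity
      nlinarith
  · rw [div_le_one hTpos, hT, hb]
    exact_mod_cast Finset.card_le_univ B
  · rw [div_le_iff₀ hTpos, mul_assoc, ← hs1, hb, Finset.card_eq_sum_ones]
    push_cast
    apply Finset.sum_le_sum
    intro ω hω
    obtain ⟨u, hu, h⟩ := (Finset.mem_filter.1 hω).2
    have := Finset.single_le_sum (f := fun u => if E u ω then (1:ℝ) else 0)
      (fun i _ => by split_ifs <;> norm_num) hu
    rw [if_pos h] at this
    exact this

theorem tub_zmod {a : ZMod 2} (h : a ≠ 0) : a = 1 := by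
  revert a; decide

theorem tub_surj1 {k : ℕ} {J : Type*} [Fintype J] (u : Fin k → ZMod 2) (hu : u ≠ 0) (z : J → ZMod 2) :
    ∃ G : Matrix (Fin k) J (ZMod 2), Matrix.vecMul u G = z := by
  obtain ⟨i, hi⟩ := Function.ne_iff.1 hu
  have hi := tub_zmod hi
  refine ⟨Matrix.vecMulVec (Pi.single i 1) z, ?_⟩
  rw [Matrix.vecMul_vecMulVec]
  simp [hi]

theorem tub_surj2_aux {k : ℕ} {J : Type*} [Fintype J] (u v : Fin k → ZMod 2)
    (hv : v ≠ 0) (i : Fin k) (hui : u i = 1) (hvi : v i = 0) (z z' : J → ZMod 2) :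
    ∃ G : Matrix (Fin k) J (ZMod 2), Matrix.vecMul u G = z ∧ Matrix.vecMul v G = z' := by
  obtain ⟨j, hj⟩ := Function.ne_iff.1 hv
  have hj := tub_zmod hj
  refine ⟨Matrix.vecMulVec (Pi.single i 1) z +
    Matrix.vecMulVec (Pi.single j 1 - u j • Pi.single i 1) z', ?_, ?_⟩
  · rw [Matrix.vecMul_add, Matrix.vecMul_vecMulVec, Matrix.vecMul_vecMulVec]
    simp [hui, dotProduct_sub]
  · rw [Matrix.vecMul_add, Matrix.vecMul_vecMulVec, Matrix.vecMul_vecMulVec]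
    simp [hvi, hj, dotProduct_sub]

theorem tub_surj2 {k : ℕ} {J : Type*} [Fintype J] (u v : Fin k → ZMod 2) (hu : u ≠ 0)
    (hv : v ≠ 0) (huv : u ≠ v) (z z' : J → ZMod 2) :
    ∃ G : Matrix (Fin k) J (ZMod 2), Matrix.vecMul u G = z ∧ Matrix.vecMul v G = z' := by
  obtain ⟨i, hi⟩ := Function.ne_iff.1 huv
  by_cases h : v i = 0
  · exact tub_surj2_aux u v hv i (tub_zmod (by rwa [h] at hi)) h z z'
  · have hv1 := tub_zmod h
    have hu0 : u i = 0 := by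
      by_contra h0
      exact hi (by rw [hv1, tub_zmod h0])
    obtain ⟨G, h1, h2⟩ := tub_surj2_aux v u hu i hv1 hu0 z' z
    exact ⟨G, h2, h1⟩

open Classical in
theorem tub_code {k : ℕ} (hk : 0 < k) {J : Type*} [Fintype J] [DecidableEq J] (S : Finset (J → ZMod 2))
    (hS : S.Nonempty) (a T b : ℝ) (ha : a = S.card / Fintype.card (J → ZMod 2))
    (hT : T = Fintype.card (Matrix (Fin k) J (ZMod 2)))
    (hb : b = (Finset.univ.filter (fun G : Matrix (Fin k) J (ZMod 2) =>
      ∃ u, u ≠ 0 ∧ Matrix.vecMul u G ∈ S)).card) :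
    min (1 / 2) (((2:ℝ) ^ k - 2) * a / 2) ≤ b / T ∧
      b / T ≤ min 1 (((2:ℝ) ^ k - 1) * a) := by
  have hN : (0:ℝ) < Fintype.card (J → ZMod 2) := by exact_mod_cast Fintype.card_pos
  have hTp : 0 < T := by rw [hT]; exact_mod_cast Fintype.card_pos
  have hap : 0 < a := by
    rw [ha]; have : (0:ℝ) < S.card := by exact_mod_cast hS.card_pos
    positivity
  set F : Finset (Fin k → ZMod 2) := Finset.univ.erase 0 with hFdef
  have hFn : F.card = 2 ^ k - 1 := by
    rw [hFdef, Finset.card_erase_of_mem (Finset.mem_univ _)]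
    simp [ZMod.card]
  have h2k : 2 ≤ 2 ^ k := Nat.le_self_pow hk.ne' 2
  have hF : (F.card : ℝ) = 2 ^ k - 1 := by
    rw [hFn, Nat.cast_sub (by omega)]; simp
  have key := tub_abstract F (fun u (G : Matrix (Fin k) J (ZMod 2)) => Matrix.vecMul u G ∈ S)
    a T hT hTp hap (by omega) ?_ ?_ b ?_
  · rw [hF] at key
    convert key using 4
    ring
  · intro u hu
    have hu0 : u ≠ 0 := Finset.ne_of_mem_erase hu
    have := tub_fiber (G := Matrix (Fin k) J (ZMod 2)) (H := J → ZMod 2)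
      ⟨⟨fun G => Matrix.vecMul u G, by simp⟩, fun A B => Matrix.vecMul_add A B u⟩
      (fun z => tub_surj1 u hu0 z) S
    rw [ha, hT, div_mul_eq_mul_div, eq_div_iff hN.ne']
    convert this <;> rfl
  · intro u hu v hv huv
    have hu0 : u ≠ 0 := Finset.ne_of_mem_erase hu
    have hv0 : v ≠ 0 := Finset.ne_of_mem_erase hv
    have := tub_fiber (G := Matrix (Fin k) J (ZMod 2)) (H := (J → ZMod 2) × (J → ZMod 2))
      ⟨⟨fun G => (Matrix.vecMul u G, Matrix.vecMul v G), by simp⟩,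
        fun A B => by simp [Matrix.vecMul_add]⟩
      (fun z => by
        obtain ⟨G, h1, h2⟩ := tub_surj2 u v hu0 hv0 huv z.1 z.2
        exact ⟨G, Prod.ext h1 h2⟩) (S ×ˢ S)
    rw [Finset.card_product, Fintype.card_prod] at this
    simp only [Finset.mem_product] at this
    rw [Nat.cast_mul, Nat.cast_mul] at this
    rw [ha, hT, div_pow, div_mul_eq_mul_div, eq_div_iff (by positivity), sq, sq]
    convert this <;> rfl
  · rw [hb]; simp [hFdef]

/-- Exponentially tight truncated union bound for the conditional error
probability of a random linear code with an additive decoding metric: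
`min{1/2, (2^k − 2)α/2} ≤ P̄ ≤ min{1, (2^k − 1)α}`, where
`α = |{x⃗' : U(x⃗',y⃗) ≥ U(x⃗,y⃗)}| 2^{−nm}` and `P̄` is the conditional probability, given
`c(w) = c₀`, that some other message `w'` has a metric score at least that of
`x⃗ = Φ(c₀)`. -/
theorem truncated_union_bound_tight
    {X Y : Type*} [Fintype X] [Fintype Y] [Nonempty X] [Nonempty Y]
    (n m : ℕ) (hn : 0 < n) (hm : 0 < m) (hcard : Fintype.card X = 2 ^ m)
    (φ : (Fin m → ZMod 2) → X) (hφ : Function.Bijective φ)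
    (U : X → Y → ℝ) (hU : ∀ x y, 0 < U x y)
    (k : ℕ) (hk : 0 < k) (hkle : k ≤ n * m)
    (w : Fin k → ZMod 2) (c0 : Fin n × Fin m → ZMod 2) (y : Fin n → Y)
    (α : ℝ)
    (hα : α = (Nat.card {x' : Fin n → X //
        (∏ i, U (φ fun j => c0 (i, j)) (y i)) ≤ ∏ i, U (x' i) (y i)} : ℝ) /
      2 ^ (n * m))
    (Pbar : ℝ)
    (hPbar : Pbar =
      (Nat.card {ω : Matrix (Fin k) (Fin n × Fin m) (ZMod 2) × ((Fin n × Fin m) → ZMod 2) //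
          (∃ w', w' ≠ w ∧
            (∏ i, U (φ fun j => c0 (i, j)) (y i)) ≤
              ∏ i, U (φ fun j => (Matrix.vecMul w' ω.1 + ω.2) (i, j)) (y i)) ∧
          Matrix.vecMul w ω.1 + ω.2 = c0} : ℝ) /
      (Nat.card {ω : Matrix (Fin k) (Fin n × Fin m) (ZMod 2) × ((Fin n × Fin m) → ZMod 2) //
          Matrix.vecMul w ω.1 + ω.2 = c0} : ℝ)) :
    min (1 / 2) (((2:ℝ) ^ k - 2) * α / 2) ≤ Pbar ∧
      Pbar ≤ min 1 (((2:ℝ) ^ k - 1) * α) := by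
  classical
  set t := ∏ i, U (φ fun j => c0 (i, j)) (y i) with ht
  let S : Finset (Fin n × Fin m → ZMod 2) := Finset.univ.filter
    (fun z => t ≤ ∏ i, U (φ fun j => (z + c0) (i, j)) (y i))
  have hden : Nat.card {ω : Matrix (Fin k) (Fin n × Fin m) (ZMod 2) × ((Fin n × Fin m) → ZMod 2) //
          Matrix.vecMul w ω.1 + ω.2 = c0} = Fintype.card (Matrix (Fin k) (Fin n × Fin m) (ZMod 2)) := by
    rw [← Nat.card_eq_fintype_card]
    refine Nat.card_congr ⟨fun ω => ω.1.1, fun G => ⟨(G, c0 - Matrix.vecMul w G), by simp⟩, ?_, ?_⟩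
    · rintro ⟨⟨G, v⟩, h⟩
      simp only [Subtype.mk.injEq, Prod.mk.injEq, true_and]
      rw [← h]; simp
    · intro G; rfl
  have hnum : Nat.card {ω : Matrix (Fin k) (Fin n × Fin m) (ZMod 2) × ((Fin n × Fin m) → ZMod 2) //
          (∃ w', w' ≠ w ∧
            t ≤ ∏ i, U (φ fun j => (Matrix.vecMul w' ω.1 + ω.2) (i, j)) (y i)) ∧
          Matrix.vecMul w ω.1 + ω.2 = c0} =
      (Finset.univ.filter (fun G : Matrix (Fin k) (Fin n × Fin m) (ZMod 2) =>
      ∃ u, u ≠ 0 ∧ Matrix.vecMul u G ∈ S)).card := by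
    rw [← Fintype.card_subtype, ← Nat.card_eq_fintype_card]
    refine Nat.card_congr ⟨fun ω => ⟨ω.1.1, ?_⟩, fun G => ⟨(G.1, c0 - Matrix.vecMul w G.1), ?_, by simp⟩, ?_, ?_⟩
    · obtain ⟨⟨G, v⟩, ⟨w', hw, h⟩, h'⟩ := ω
      refine ⟨w' - w, sub_ne_zero.2 hw, ?_⟩
      simp only [S, Finset.mem_filter, Finset.mem_univ, true_and]
      have e : Matrix.vecMul (w' - w) G + c0 = Matrix.vecMul w' G + v := by
        rw [← h', Matrix.sub_vecMul]; simp only []; abel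
      rw [e]; exact h
    · obtain ⟨G, u, hu, h⟩ := G
      refine ⟨u + w, by simpa using hu, ?_⟩
      simp only [S, Finset.mem_filter, Finset.mem_univ, true_and] at h
      have e : Matrix.vecMul (u + w) G + (c0 - Matrix.vecMul w G) = Matrix.vecMul u G + c0 := by
        rw [Matrix.add_vecMul]; abel
      simp only [e]; exact h
    · rintro ⟨⟨G, v⟩, h0, h⟩
      simp only [Subtype.mk.injEq, Prod.mk.injEq, true_and]
      rw [← h]; simp
    · intro G; rfl
  have hA : Nat.card {x' : Fin n → X // t ≤ ∏ i, U (x' i) (y i)} = S.card := by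
    rw [← Fintype.card_subtype, ← Nat.card_eq_fintype_card]
    symm
    refine Nat.card_congr (Equiv.subtypeEquiv (((Equiv.addRight c0).trans
      (Equiv.curry (Fin n) (Fin m) (ZMod 2))).trans
      (Equiv.piCongrRight fun _ => Equiv.ofBijective φ hφ)) ?_)
    intro z
    rfl
  have hS : S.Nonempty := ⟨0, by simp [S, ht]⟩
  rw [hPbar, hnum, hden]
  have hα' : α = S.card / Fintype.card (Fin n × Fin m → ZMod 2) := by
    rw [hα, hA]
    simp [ZMod.card]
  have key := tub_code hk S hS α _ _ hα' rfl rfl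
  convert key
end

section
/- Let X and Y be finite nonempty alphabets, P_X a probability mass function on X with P_X(x) > 0 for all x, and W a channel with W(y|x) > 0 for all x, y and Σ_y W(y|x) = 1 for each x. Let I(X;Y) = Σ_{x,y} P_X(x) W(y|x) log₂( W(y|x) / Σ_{x'} P_X(x') W(y|x') ) be the mutual information induced by P_X and W, and let U_MAP(x,y) = P_X(x) W(y|x). Then for every R < I(X;Y), E_r(R, U_MAP) = max_{ρ∈[0,1]} sup_{θ≥0} { −Σ_x P_X(x) log₂( Σ_y W(y|x) / U_θ(x|y)^ρ ) + ρ(H(P_X) − R) } > 0, where U_θ(x|y) = U_MAP(x,y)^θ / Σ_{x'} U_MAP(x',y)^θ. In particular, the mismatched MAP metric achieves every rate below I(X;Y). -/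
/-- Base-2 entropy of a probability mass function on a finite alphabet. -/
noncomputable def entropy2 {X : Type*} [Fintype X] (P : X → ℝ) : ℝ :=
  -∑ x, P x * Real.logb 2 (P x)

/-- The normalized metric `U_θ(x|y) = U(x,y)^θ / Σ_{x'} U(x',y)^θ`. -/
noncomputable def Utheta {X Y : Type*} [Fintype X] (U : X → Y → ℝ) (θ : ℝ)
    (x : X) (y : Y) : ℝ :=
  U x y ^ θ / ∑ x', U x' y ^ θ

/-- The mismatched MAP metric `U_MAP(x,y) = P_X(x)W(y|x)` has a strictly
positive error exponent
`E_r(R,U_MAP) = max_{ρ∈[0,1]} sup_{θ≥0} { −Σ_x P_X(x) log₂( Σ_y W(y|x)/U_θ(x|y)^ρ )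
+ ρ(H(P_X) − R) }` at every rate `R < I(X;Y)`; i.e., it achieves every rate below the
mutual information. -/
theorem map_metric_achieves_mutual_information
    {X Y : Type*} [Fintype X] [Fintype Y] [Nonempty X] [Nonempty Y]
    (P : X → ℝ) (hP0 : ∀ x, 0 < P x) (hP1 : ∑ x, P x = 1)
    (W : X → Y → ℝ) (hW : ∀ x y, 0 < W x y) (hWsum : ∀ x, ∑ y, W x y = 1)
    (R : ℝ)
    (hR : R < ∑ x, ∑ y, P x * W x y *
      Real.logb 2 (W x y / ∑ x', P x' * W x' y)) :
    0 < ⨆ ρ : Set.Icc (0:ℝ) 1, ⨆ θ : Set.Ici (0:ℝ),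
        (-∑ x, P x * Real.logb 2
            (∑ y, W x y / Utheta (fun x y => P x * W x y) θ.1 x y ^ (ρ.1 : ℝ))
          + ρ.1 * (entropy2 P - R)) := by
  classical
  have hU0 : ∀ (θ : ℝ) x y, 0 < Utheta (fun x y => P x * W x y) θ x y := by
    intro θ x y
    unfold Utheta
    apply div_pos (Real.rpow_pos_of_pos (mul_pos (hP0 x) (hW x y)) _)
    exact Finset.sum_pos (fun x _ => Real.rpow_pos_of_pos (mul_pos (hP0 x) (hW x y)) _)
      Finset.univ_nonempty
  have hU1 : ∀ (θ : ℝ) x y, Utheta (fun x y => P x * W x y) θ x y ≤ 1 := by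
    intro θ x y
    unfold Utheta
    apply div_le_one_of_le₀
    · exact Finset.single_le_sum (f := fun x' => (P x' * W x' y) ^ θ)
        (fun x _ => (Real.rpow_pos_of_pos (mul_pos (hP0 x) (hW x y)) _).le) (Finset.mem_univ x)
    · exact Finset.sum_nonneg
        (fun x _ => (Real.rpow_pos_of_pos (mul_pos (hP0 x) (hW x y)) _).le)
  set F : ℝ → ℝ → ℝ := fun ρ θ => (-∑ x, P x * Real.logb 2
            (∑ y, W x y / Utheta (fun x y => P x * W x y) θ x y ^ ρ)
          + ρ * (entropy2 P - R)) with hF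
  have hFle : ∀ (ρ : Set.Icc (0:ℝ) 1) (θ : Set.Ici (0:ℝ)), F ρ.1 θ.1 ≤ |entropy2 P - R| := by
    rintro ⟨ρ, hρ0, hρ1⟩ ⟨θ, hθ⟩
    have h1 : 0 ≤ ∑ x, P x * Real.logb 2
            (∑ y, W x y / Utheta (fun x y => P x * W x y) θ x y ^ ρ) := by
      apply Finset.sum_nonneg
      intro x _
      apply mul_nonneg (hP0 x).le
      apply Real.logb_nonneg (by norm_num)
      rw [← hWsum x]
      apply Finset.sum_le_sum
      intro y _
      apply le_div_self (hW x y).le (Real.rpow_pos_of_pos (hU0 θ x y) _)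
      exact Real.rpow_le_one (hU0 θ x y).le (hU1 θ x y) hρ0
    have h2 : ρ * (entropy2 P - R) ≤ |entropy2 P - R| := by
      calc _ ≤ ρ * |entropy2 P - R| := by gcongr; exact le_abs_self _
        _ ≤ _ := mul_le_of_le_one_left (abs_nonneg _) hρ1
    simp only [hF]
    linarith
  have hkey : ∃ ρ : Set.Icc (0:ℝ) 1, 0 < F ρ.1 1 := by
    have hd : HasDerivAt (fun ρ => F ρ 1)
        ((∑ x, ∑ y, P x * W x y *
          Real.logb 2 (W x y / ∑ x', P x' * W x' y)) - R) 0 := by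
      have hin : ∀ x, HasDerivAt (fun ρ : ℝ => ∑ y, W x y / Utheta (fun x y => P x * W x y) 1 x y ^ ρ)
          (∑ y, W x y * -Real.log (Utheta (fun x y => P x * W x y) 1 x y)) 0 := by
        intro x
        apply HasDerivAt.fun_sum
        intro y _
        have h := (((hasDerivAt_id (0:ℝ)).const_rpow (hU0 1 x y)).fun_inv
          (by simp)).const_mul (W x y)
        simpa [div_eq_mul_inv] using h
      have hlog : ∀ x, HasDerivAt (fun ρ : ℝ => P x * Real.logb 2
          (∑ y, W x y / Utheta (fun x y => P x * W x y) 1 x y ^ ρ))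
          (P x * ((∑ y, W x y * -Real.log (Utheta (fun x y => P x * W x y) 1 x y)) / Real.log 2)) 0 := by
        intro x
        have h := (((hin x).log (by simp [hWsum])).div_const (Real.log 2)).const_mul (P x)
        simpa [Real.logb, hWsum] using h
      have hall := ((HasDerivAt.fun_sum (u := Finset.univ) (fun x _ => hlog x)).fun_neg).fun_add
        ((hasDerivAt_id (0:ℝ)).mul_const (entropy2 P - R))
      refine hall.congr_deriv ?_
      have hid : ∀ x, P x * ((∑ y, W x y * -Real.log (Utheta (fun x y => P x * W x y) 1 x y)) / Real.log 2)
          = -(P x * Real.logb 2 (P x)) - ∑ y, P x * W x y *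
          Real.logb 2 (W x y / ∑ x', P x' * W x' y) := by
        intro x
        have e : ∀ y, P x * W x y * Real.logb 2 (W x y / ∑ x', P x' * W x' y)
            = -(P x * (W x y * -Real.log (Utheta (fun x y => P x * W x y) 1 x y) / Real.log 2))
              - W x y * (P x * Real.logb 2 (P x)) := by
          intro y
          have hq : 0 < ∑ x', P x' * W x' y :=
            Finset.sum_pos (fun x _ => mul_pos (hP0 x) (hW x y)) Finset.univ_nonempty
          have : Real.log (Utheta (fun x y => P x * W x y) 1 x y)
              = Real.log (P x) + Real.log (W x y / ∑ x', P x' * W x' y) := by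
            rw [← Real.log_mul (hP0 x).ne' (div_pos (hW x y) hq).ne']
            simp [Utheta, mul_div_assoc]
          rw [this]
          simp only [Real.logb]
          ring
        simp only [e]
        rw [Finset.sum_sub_distrib, ← Finset.sum_mul, hWsum, Finset.sum_neg_distrib,
          ← Finset.mul_sum, ← Finset.sum_div]
        ring
      simp only [hid, Finset.sum_sub_distrib, Finset.sum_neg_distrib, entropy2]
      ring
    have hF0 : F 0 1 = 0 := by simp [hF, hWsum]
    have ht := hd.tendsto_slope_zero_right
    have hev := ht.eventually (lt_mem_nhds (sub_pos.2 hR))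
    have hev2 : ∀ᶠ t : ℝ in nhdsWithin 0 (Set.Ioi 0), t ∈ Set.Ioo (0:ℝ) 1 :=
      Ioo_mem_nhdsGT (by norm_num)
    obtain ⟨t, h1, h2, h3⟩ := (hev.and hev2).exists
    refine ⟨⟨t, h2.le, h3.le⟩, ?_⟩
    simp only [zero_add, hF0, sub_zero, smul_eq_mul] at h1
    exact (pos_iff_pos_of_mul_pos h1).1 (inv_pos.2 h2)
  obtain ⟨ρ, hρ⟩ := hkey
  have hne : Nonempty (Set.Ici (0:ℝ)) := ⟨⟨0, by simp⟩⟩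
  have hb1 : ∀ ρ : Set.Icc (0:ℝ) 1, BddAbove (Set.range fun θ : Set.Ici (0:ℝ) => F ρ.1 θ.1) :=
    fun ρ => ⟨_, by rintro _ ⟨θ, rfl⟩; exact hFle ρ θ⟩
  have hb2 : BddAbove (Set.range fun ρ : Set.Icc (0:ℝ) 1 => ⨆ θ : Set.Ici (0:ℝ), F ρ.1 θ.1) :=
    ⟨|entropy2 P - R|, by rintro _ ⟨ρ, rfl⟩; exact ciSup_le (hFle ρ)⟩
  calc 0 < F ρ.1 1 := hρ
    _ ≤ ⨆ θ : Set.Ici (0:ℝ), F ρ.1 θ.1 := le_ciSup (hb1 ρ) ⟨1, by simp⟩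
    _ ≤ _ := le_ciSup hb2 ρ
end

section
/- Let X and Y be finite nonempty alphabets, P_X a probability mass function on X with P_X(x) > 0 for all x, and W a channel with W(y|x) > 0 for all x, y and Σ_y W(y|x) = 1 for each x. Let P_Y(y) = Σ_x P_X(x)W(y|x), P_{X|Y}(x|y) = P_X(x)W(y|x)/P_Y(y), and H(X|Y) = −Σ_{x,y} P_X(x)W(y|x) log₂ P_{X|Y}(x|y). Let U : X×Y → (0,∞), fix θ > 0, and set U_θ(x|y) = U(x,y)^θ / Σ_{x'} U(x',y)^θ. If for every ε > 0 there exists ρ ∈ [0,1] such that −Σ_x P_X(x) log₂( Σ_y W(y|x) / U_θ(x|y)^ρ ) + ρ( H(X|Y) + ε ) > 0, then U_θ(x|y) = P_{X|Y}(x|y) for every x ∈ X and every y ∈ Y with P_Y(y) > 0. -/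
theorem jensen_aux {Y : Type*} [Fintype Y] [Nonempty Y] (w v : Y → ℝ) (hw : ∀ y, 0 < w y)
    (h1 : ∑ y, w y = 1) (hv : ∀ y, 0 < v y) (ρ : ℝ) :
    -(ρ * ∑ y, w y * Real.log (v y)) ≤ Real.log (∑ y, w y / v y ^ ρ) := by
  have h := strictConcaveOn_log_Ioi.concaveOn.le_map_sum (t := Finset.univ) (w := w)
    (p := fun y => (v y ^ ρ)⁻¹) (fun y _ => (hw y).le) h1
    (fun y _ => inv_pos.mpr (Real.rpow_pos_of_pos (hv y) ρ))
  simp only [smul_eq_mul, Real.log_inv, ← div_eq_mul_inv] at h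
  refine le_trans (le_of_eq ?_) h
  rw [Finset.mul_sum, ← Finset.sum_neg_distrib]
  refine Finset.sum_congr rfl fun y _ => ?_
  rw [Real.log_rpow (hv y)]; ring

theorem gibbs_aux {a p v : ℝ} (ha : 0 < a) (hp : 0 < p) (hv : 0 < v) :
    0 ≤ a * (Real.log (a / p) - Real.log v) - (a - v * p) ∧
    (a * (Real.log (a / p) - Real.log v) - (a - v * p) = 0 → v = a / p) := by
  have hq : 0 < a / p := div_pos ha hp
  have e : a * (Real.log (a / p) - Real.log v) - (a - v * p)
      = a * ((v / (a / p) - 1) - Real.log (v / (a / p))) := by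
    rw [Real.log_div hv.ne' hq.ne']; field_simp; ring
  have hr : 0 < v / (a / p) := div_pos hv hq
  rw [e]
  refine ⟨mul_nonneg ha.le (sub_nonneg.mpr (Real.log_le_sub_one_of_pos hr)), fun h => ?_⟩
  by_contra hne
  have h1 : v / (a / p) ≠ 1 := fun h => hne ((div_eq_one_iff_eq hq.ne').mp h)
  have := mul_pos ha (sub_pos.mpr (Real.log_lt_sub_one_of_pos hr h1))
  linarith

/-- Necessity of the MAP metric for achieving the mutual information rate.
If for every `ε > 0` there is `ρ ∈ [0,1]` with
`−Σ_x P_X(x) log₂( Σ_y W(y|x)/U_θ(x|y)^ρ ) + ρ(H(X|Y) + ε) > 0`,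
then `U_θ(x|y) = P_{X|Y}(x|y)` for every `x` and every `y` with `P_Y(y) > 0`. -/
theorem metric_achieving_mutual_information_is_posterior
    {X Y : Type*} [Fintype X] [Fintype Y] [Nonempty X] [Nonempty Y]
    (P : X → ℝ) (hP0 : ∀ x, 0 < P x) (hP1 : ∑ x, P x = 1)
    (W : X → Y → ℝ) (hW : ∀ x y, 0 < W x y) (hWsum : ∀ x, ∑ y, W x y = 1)
    (U : X → Y → ℝ) (hU : ∀ x y, 0 < U x y) (θ : ℝ) (hθ : 0 < θ)
    (hach : ∀ ε > (0:ℝ), ∃ ρ ∈ Set.Icc (0:ℝ) 1,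
      0 < -∑ x, P x * Real.logb 2 (∑ y, W x y / Utheta U θ x y ^ ρ)
          + ρ * ((-∑ x, ∑ y, P x * W x y *
              Real.logb 2 (P x * W x y / ∑ x', P x' * W x' y)) + ε)) :
    ∀ x y, 0 < ∑ x', P x' * W x' y →
      Utheta U θ x y = P x * W x y / ∑ x', P x' * W x' y := by
  intro x₀ y₀ _
  have hpY : ∀ y, 0 < ∑ x', P x' * W x' y := fun y =>
    Finset.sum_pos (fun x _ => mul_pos (hP0 x) (hW x y)) Finset.univ_nonempty
  have hS : ∀ y, 0 < ∑ x', U x' y ^ θ := fun y =>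
    Finset.sum_pos (fun x _ => Real.rpow_pos_of_pos (hU x y) θ) Finset.univ_nonempty
  have hV : ∀ x y, 0 < Utheta U θ x y := fun x y =>
    div_pos (Real.rpow_pos_of_pos (hU x y) θ) (hS y)
  have hV1 : ∀ y, ∑ x, Utheta U θ x y = 1 := fun y => by
    unfold Utheta
    rw [← Finset.sum_div, div_self (hS y).ne']
  generalize Utheta U θ = V at *
  obtain ⟨p, hp⟩ : ∃ p : Y → ℝ, p = fun y => ∑ x', P x' * W x' y := ⟨_, rfl⟩
  have hp' : ∀ y, ∑ x', P x' * W x' y = p y := fun y => by rw [hp]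
  simp only [hp'] at hach hpY ⊢
  have hl2 : 0 < Real.log 2 := Real.log_pos (by norm_num)
  -- main inequality
  have hD : ∑ x, ∑ y, P x * W x y * (Real.log (P x * W x y / p y) - Real.log (V x y)) ≤ 0 := by
    refine le_of_forall_pos_le_add fun ε hε => ?_
    obtain ⟨ρ, ⟨hρ0, -⟩, h⟩ := hach (ε / Real.log 2) (div_pos hε hl2)
    have hJ : -(ρ * ∑ x, ∑ y, P x * W x y * Real.log (V x y)) ≤
        ∑ x, P x * Real.log (∑ y, W x y / V x y ^ ρ) := by
      rw [Finset.mul_sum, ← Finset.sum_neg_distrib]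
      refine Finset.sum_le_sum fun x _ => ?_
      refine le_trans (le_of_eq ?_) (mul_le_mul_of_nonneg_left
        (jensen_aux (W x) (V x) (hW x) (hWsum x) (hV x) ρ) (hP0 x).le)
      simp only [mul_assoc, ← Finset.mul_sum]; ring
    simp only [Real.logb, ← mul_div_assoc, ← Finset.sum_div] at h
    have h2 := mul_pos h hl2
    have e : (-((∑ x, P x * Real.log (∑ y, W x y / V x y ^ ρ)) / Real.log 2) +
        ρ * (-((∑ x, ∑ y, P x * W x y * Real.log (P x * W x y / p y)) / Real.log 2)
          + ε / Real.log 2)) * Real.log 2 =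
        -(∑ x, P x * Real.log (∑ y, W x y / V x y ^ ρ)) +
        ρ * (-(∑ x, ∑ y, P x * W x y * Real.log (P x * W x y / p y)) + ε) := by
      field_simp
    rw [e] at h2
    simp only [mul_sub, Finset.sum_sub_distrib]
    have h3 : 0 < ρ * ((∑ x, ∑ y, P x * W x y * Real.log (V x y)) -
      (∑ x, ∑ y, P x * W x y * Real.log (P x * W x y / p y)) + ε) := by linarith
    have h4 := pos_of_mul_pos_right h3 hρ0
    linarith
  have hz : ∑ x, ∑ y, (P x * W x y - V x y * p y) = 0 := by
    rw [Finset.sum_comm]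
    refine Finset.sum_eq_zero fun y _ => ?_
    rw [Finset.sum_sub_distrib, ← Finset.sum_mul, hV1, hp' y]; ring
  have hg := fun x y => gibbs_aux (mul_pos (hP0 x) (hW x y)) (hpY y) (hV x y)
  have ht : ∑ x, ∑ y, (P x * W x y * (Real.log (P x * W x y / p y) - Real.log (V x y))
      - (P x * W x y - V x y * p y)) = 0 := by
    refine le_antisymm ?_ (Finset.sum_nonneg fun x _ => Finset.sum_nonneg fun y _ => (hg x y).1)
    simp only [Finset.sum_sub_distrib] at hz ⊢
    linarith
  have h1 := (Finset.sum_eq_zero_iff_of_nonneg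
    (fun x _ => Finset.sum_nonneg fun y _ => (hg x y).1)).mp ht x₀ (Finset.mem_univ _)
  have h2 := (Finset.sum_eq_zero_iff_of_nonneg
    (fun y _ => (hg x₀ y).1)).mp h1 y₀ (Finset.mem_univ _)
  exact (hg x₀ y₀).2 h2
end

section
/- Let X and Y be finite nonempty alphabets, P_X a probability mass function on X with P_X(x) > 0 for all x, W a channel with W(y|x) > 0 for all x, y and Σ_y W(y|x) = 1 for each x, and ρ ∈ [0,1]. Suppose Z : X → (0,∞) satisfies Z(x) = Σ_y W(y|x)^{1/(1+ρ)} [ Σ_{x'} P_X(x') W(y|x')^{1/(1+ρ)} / Z(x') ]^ρ for all x. Define V(y) = [ Σ_x P_X(x) W(y|x)^{1/(1+ρ)} / Z(x) ]^{1+ρ} and W̃(y|x) = W(y|x)^{1/(1+ρ)} V(y)^{ρ/(1+ρ)} / Z(x). Then: (i) Σ_y W̃(y|x) = 1 for every x ∈ X, i.e., W̃ is a channel; and (ii) V(y) = Σ_x P_X(x) W̃(y|x) for every y ∈ Y, i.e., V is the output distribution induced by P_X and W̃. -/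
/-- Given a positive solution `Z` of the fixed point equations, the tilted
kernel `W̃(y|x) = W(y|x)^{1/(1+ρ)} V(y)^{ρ/(1+ρ)}/Z(x)`, with
`V(y) = [Σ_x P_X(x) W(y|x)^{1/(1+ρ)}/Z(x)]^{1+ρ}`, is a channel, and `V` is its output
distribution under input distribution `P_X`. -/
theorem tilted_kernel_is_channel_with_output_V
    {X Y : Type*} [Fintype X] [Fintype Y] [Nonempty X] [Nonempty Y]
    (P : X → ℝ) (hP0 : ∀ x, 0 < P x) (hP1 : ∑ x, P x = 1)
    (W : X → Y → ℝ) (hW : ∀ x y, 0 < W x y) (hWsum : ∀ x, ∑ y, W x y = 1)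
    (ρ : ℝ) (hρ : ρ ∈ Set.Icc (0:ℝ) 1)
    (Z : X → ℝ) (hZpos : ∀ x, 0 < Z x)
    (hZfix : ∀ x, Z x = ∑ y, W x y ^ (1 / (1 + ρ)) *
      (∑ x', P x' * W x' y ^ (1 / (1 + ρ)) / Z x') ^ ρ) :
    (∀ x, ∑ y,
        W x y ^ (1 / (1 + ρ)) *
            ((∑ x', P x' * W x' y ^ (1 / (1 + ρ)) / Z x') ^ (1 + ρ)) ^ (ρ / (1 + ρ)) /
          Z x = 1) ∧
    (∀ y, (∑ x', P x' * W x' y ^ (1 / (1 + ρ)) / Z x') ^ (1 + ρ) =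
      ∑ x, P x *
        (W x y ^ (1 / (1 + ρ)) *
            ((∑ x', P x' * W x' y ^ (1 / (1 + ρ)) / Z x') ^ (1 + ρ)) ^ (ρ / (1 + ρ)) /
          Z x)) := by
  have h1 : (0:ℝ) < 1 + ρ := by linarith [hρ.1]
  have hS : ∀ y, 0 < ∑ x', P x' * W x' y ^ (1 / (1 + ρ)) / Z x' := fun y =>
    Finset.sum_pos (fun x _ => div_pos (mul_pos (hP0 x) (Real.rpow_pos_of_pos (hW x y) _))
      (hZpos x)) Finset.univ_nonempty
  have hV : ∀ y, ((∑ x', P x' * W x' y ^ (1 / (1 + ρ)) / Z x') ^ (1 + ρ)) ^ (ρ / (1 + ρ))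
      = (∑ x', P x' * W x' y ^ (1 / (1 + ρ)) / Z x') ^ ρ := fun y => by
    rw [← Real.rpow_mul (hS y).le, mul_div_cancel₀ _ h1.ne']
  simp only [hV]
  refine ⟨fun x => ?_, fun y => ?_⟩
  · rw [← Finset.sum_div, ← hZfix x, div_self (hZpos x).ne']
  · rw [Real.rpow_add (hS y), Real.rpow_one]
    generalize (∑ x', P x' * W x' y ^ (1 / (1 + ρ)) / Z x') ^ ρ = c
    rw [Finset.sum_mul]
    exact Finset.sum_congr rfl fun x _ => by ring
end

section
/- Let X and Y be finite nonempty alphabets, P_X a probability mass function on X with P_X(x) > 0 for all x, W a channel with W(y|x) > 0 for all x, y and Σ_y W(y|x) = 1 for each x, and ρ ∈ [0,1]. Suppose Z : X → (0,∞) satisfies Z(x) = Σ_y W(y|x)^{1/(1+ρ)} [ Σ_{x'} P_X(x') W(y|x')^{1/(1+ρ)} / Z(x') ]^ρ for all x. Define V(y) = [ Σ_x P_X(x) W(y|x)^{1/(1+ρ)} / Z(x) ]^{1+ρ}, W̃(y|x) = W(y|x)^{1/(1+ρ)} V(y)^{ρ/(1+ρ)} / Z(x), and U_*(x|y) = ( P_X(x)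 W(y|x)^{1/(1+ρ)} / Z(x) ) / ( Σ_{x'} P_X(x') W(y|x')^{1/(1+ρ)} / Z(x') ). Then for all x ∈ X and y ∈ Y: (i) U_*(x|y) = P_X(x) W̃(y|x) / Σ_{x'} P_X(x') W̃(y|x'), i.e., U_* is the posterior induced by P_X and W̃; and (ii) W(y|x) / ( W̃(y|x) · U_*(x|y)^ρ ) = Z(x)^{1+ρ} / P_X(x)^ρ, which does not depend on y. -/
/-- Saturation conditions for the optimal metric. Given a positive solution
`Z` of the fixed point equations, and with
`V(y) = [Σ_x P_X(x) W(y|x)^{1/(1+ρ)}/Z(x)]^{1+ρ}`,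
`W̃(y|x) = W(y|x)^{1/(1+ρ)} V(y)^{ρ/(1+ρ)}/Z(x)`, and
`U_*(x|y) = (P_X(x) W(y|x)^{1/(1+ρ)}/Z(x)) / Σ_{x'} P_X(x') W(y|x')^{1/(1+ρ)}/Z(x')`,
the metric `U_*` is the posterior induced by `P_X` and `W̃`, and the ratio
`W(y|x)/(W̃(y|x) U_*(x|y)^ρ) = Z(x)^{1+ρ}/P_X(x)^ρ` does not depend on `y`. -/
theorem optimal_metric_saturation_conditions
    {X Y : Type*} [Fintype X] [Fintype Y] [Nonempty X] [Nonempty Y]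
    (P : X → ℝ) (hP0 : ∀ x, 0 < P x) (hP1 : ∑ x, P x = 1)
    (W : X → Y → ℝ) (hW : ∀ x y, 0 < W x y) (hWsum : ∀ x, ∑ y, W x y = 1)
    (ρ : ℝ) (hρ : ρ ∈ Set.Icc (0:ℝ) 1)
    (Z : X → ℝ) (hZpos : ∀ x, 0 < Z x)
    (hZfix : ∀ x, Z x = ∑ y, W x y ^ (1 / (1 + ρ)) *
      (∑ x', P x' * W x' y ^ (1 / (1 + ρ)) / Z x') ^ ρ)
    (V : Y → ℝ)
    (hV : ∀ y, V y = (∑ x', P x' * W x' y ^ (1 / (1 + ρ)) / Z x') ^ (1 + ρ))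
    (Wt : X → Y → ℝ)
    (hWt : ∀ x y, Wt x y = W x y ^ (1 / (1 + ρ)) * V y ^ (ρ / (1 + ρ)) / Z x)
    (Ustar : X → Y → ℝ)
    (hUstar : ∀ x y, Ustar x y =
      (P x * W x y ^ (1 / (1 + ρ)) / Z x) /
        ∑ x', P x' * W x' y ^ (1 / (1 + ρ)) / Z x') :
    (∀ x y, Ustar x y = P x * Wt x y / ∑ x', P x' * Wt x' y) ∧
    (∀ x y, W x y / (Wt x y * Ustar x y ^ ρ) = Z x ^ (1 + ρ) / P x ^ ρ) := by
  have h1 : (0:ℝ) < 1 + ρ := by linarith [hρ.1]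
  have hS : ∀ y, 0 < ∑ x', P x' * W x' y ^ (1 / (1 + ρ)) / Z x' := fun y =>
    Finset.sum_pos (fun x _ => div_pos (mul_pos (hP0 x) (Real.rpow_pos_of_pos (hW x y) _))
      (hZpos x)) Finset.univ_nonempty
  have hVp : ∀ y, V y ^ (ρ / (1 + ρ)) =
      (∑ x', P x' * W x' y ^ (1 / (1 + ρ)) / Z x') ^ ρ := by
    intro y
    rw [hV, ← Real.rpow_mul (hS y).le, mul_div_cancel₀ _ h1.ne']
  constructor
  · intro x y
    have hT : 0 < V y ^ (ρ / (1 + ρ)) := by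
      rw [hVp]; exact Real.rpow_pos_of_pos (hS y) _
    have e : ∀ x', P x' * Wt x' y =
        (P x' * W x' y ^ (1 / (1 + ρ)) / Z x') * V y ^ (ρ / (1 + ρ)) := by
      intro x'; rw [hWt]; ring
    simp_rw [e]
    rw [← Finset.sum_mul, mul_div_mul_right _ _ hT.ne', hUstar]
  · intro x y
    rw [hWt, hVp, hUstar]
    have hs := hS y
    generalize (∑ x', P x' * W x' y ^ (1 / (1 + ρ)) / Z x') = S at hs
    have ha : 0 < W x y ^ (1 / (1 + ρ)) := Real.rpow_pos_of_pos (hW x y) _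
    have hw : W x y = (W x y ^ (1 / (1 + ρ))) ^ (1 + ρ) := by
      rw [← Real.rpow_mul (hW x y).le, one_div_mul_cancel h1.ne', Real.rpow_one]
    generalize W x y ^ (1 / (1 + ρ)) = a at ha hw
    have hp := hP0 x
    have hz := hZpos x
    rw [hw, Real.div_rpow (by positivity) hs.le, Real.div_rpow (by positivity) hz.le,
      Real.mul_rpow hp.le ha.le, Real.rpow_add ha, Real.rpow_add hz, Real.rpow_one, Real.rpow_one]
    have := Real.rpow_pos_of_pos ha ρ
    have := Real.rpow_pos_of_pos hp ρ
    have := Real.rpow_pos_of_pos hz ρ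
    have := Real.rpow_pos_of_pos hs ρ
    generalize a ^ ρ = a' at *
    generalize P x ^ ρ = p' at *
    generalize Z x ^ ρ = z' at *
    generalize S ^ ρ = s' at *
    field_simp
end
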